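/- The centralizer of the infinite Chacon transformation T is reduced to the powers of T: if S is a Lebesgue-measure-preserving transformation of X = ℝ₊ commuting with T, then there exists k ∈ ℤ such that S = T^k (μ-almost everywhere). -/

import Mathlib

open MeasureTheory Set
open scoped ENNReal NNReal Classical

noncomputable section

/-- Heights of the towers of the infinite Chacon transformation
(tower `0` is `[0,1)` with a single level, so `chaconH 1 = 8`). -/
def chaconH : ℕ → ℕ
  | 0 => 1
  | n + 1 => 2 * (3 * chaconH n + 1)

/-- Left endpoint of level `k` of tower `n`.  At step `n+1`, tower `n` (which fills
`[0, hₙ·3⁻ⁿ)`) is cut into three subcolumns of equal width; one spacer is added above the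
middle subcolumn and `3hₙ+1` spacers above the third one, the spacers being taken
successively as the leftmost intervals of length `3⁻⁽ⁿ⁺¹⁾` in the unused part of `ℝ₊`;
then the three subcolumns are stacked left under right. -/
def chaconL : ℕ → ℕ → ℝ
  | 0, _ => 0
  | n + 1, k =>
      if k < chaconH n then chaconL n k
      else if k < 2 * chaconH n then chaconL n (k - chaconH n) + (3 : ℝ)⁻¹ ^ (n + 1)
      else if k = 2 * chaconH n then (chaconH n : ℝ) * (3 : ℝ)⁻¹ ^ n
      else if k ≤ 3 * chaconH n then
        chaconL n (k - 2 * chaconH n - 1) + 2 * (3 : ℝ)⁻¹ ^ (n + 1)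
      else (chaconH n : ℝ) * (3 : ℝ)⁻¹ ^ n
        + ((k : ℝ) - 3 * (chaconH n : ℝ)) * (3 : ℝ)⁻¹ ^ (n + 1)

/-- Level `k` of tower `n`: an interval of length `3⁻ⁿ`, closed to the left and open to
the right. -/
def chaconLevel (n k : ℕ) : Set ℝ := Ico (chaconL n k) (chaconL n k + (3 : ℝ)⁻¹ ^ n)

/-- The Chacon transformation on `ℝ`: each point of a non-top level of some tower is sent
to the point directly above it (the value does not depend on the choice of the tower). -/
def chaconT0 (x : ℝ) : ℝ :=
  if h : ∃ p : ℕ × ℕ, p.2 + 1 < chaconH p.1 ∧ x ∈ chaconLevel p.1 p.2 then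
    x - chaconL h.choose.1 h.choose.2 + chaconL h.choose.1 (h.choose.2 + 1)
  else x

/-- The inverse of the Chacon transformation on `ℝ`. -/
def chaconT0inv (x : ℝ) : ℝ :=
  if h : ∃ p : ℕ × ℕ, p.2 + 1 < chaconH p.1 ∧ x ∈ chaconLevel p.1 (p.2 + 1) then
    x - chaconL h.choose.1 (h.choose.2 + 1) + chaconL h.choose.1 h.choose.2
  else x

/-- The space `X = ℝ₊`. -/
abbrev ChaconX : Type := ↥(Set.Ici (0 : ℝ))

/-- The infinite Chacon transformation `T` on `X = ℝ₊`. -/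
def chaconT (x : ChaconX) : ChaconX :=
  ⟨max 0 (chaconT0 (x : ℝ)), Set.mem_Ici.mpr (le_max_left 0 _)⟩

/-- The inverse `T⁻¹` of the Chacon transformation on `X = ℝ₊`. -/
def chaconTinv (x : ChaconX) : ChaconX :=
  ⟨max 0 (chaconT0inv (x : ℝ)), Set.mem_Ici.mpr (le_max_left 0 _)⟩

/-- Integer powers `T^j` of the Chacon transformation. -/
def chaconTZ (j : ℤ) : ChaconX → ChaconX :=
  if 0 ≤ j then chaconT^[j.toNat] else chaconTinv^[(-j).toNat]

/-- Lebesgue measure `μ` on `X = ℝ₊`. -/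
def chaconMu : Measure ChaconX := volume.comap Subtype.val

/-- `C n`: the bottom half of tower `n` (its lowest `hₙ/2` levels), as a subset of `X`. -/
def chaconC (n : ℕ) : Set ChaconX :=
  {x | ∃ k, k < chaconH n / 2 ∧ (x : ℝ) ∈ chaconLevel n k}

/-- `tₙ x ∈ {1,2,3}`: the subcolumn of tower `n` containing `x`
(junk value `0` if `x` is not in tower `n`). -/
def chaconTn (n : ℕ) (x : ChaconX) : ℕ :=
  if h : ∃ k, k < chaconH n ∧ (x : ℝ) ∈ chaconLevel n k then
    1 + (⌊((x : ℝ) - chaconL n h.choose) * (3 : ℝ) ^ (n + 1)⌋).toNat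
  else 0

/-- The Cartesian power `T^{×ι}` of the Chacon transformation, acting coordinatewise. -/
def chaconTd (ι : Type) (x : ι → ChaconX) : ι → ChaconX := fun i => chaconT (x i)

/-- Integer powers `(T^{×ι})^j`, acting coordinatewise. -/
def chaconTdZ (ι : Type) (j : ℤ) (x : ι → ChaconX) : ι → ChaconX := fun i => chaconTZ j (x i)

/-- `Cₙ^ι ⊆ X^ι`. -/
def chaconCd (ι : Type) (n : ℕ) : Set (ι → ChaconX) := {x | ∀ i, x i ∈ chaconC n}

/-- An `n`-box: a Cartesian product of levels of `C n`. -/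
def IsNBox (ι : Type) (n : ℕ) (B : Set (ι → ChaconX)) : Prop :=
  ∃ k : ι → ℕ, (∀ i, k i < chaconH n / 2) ∧
    B = {x : ι → ChaconX | ∀ i, ((x i : ℝ)) ∈ chaconLevel n (k i)}

/-- An `n`-diagonal: a maximal finite family of `n`-boxes `B, T^{×d}B, …, (T^{×d})^ℓ B`,
regarded as the union of its boxes. -/
def IsNDiagonal (ι : Type) (n : ℕ) (D : Set (ι → ChaconX)) : Prop :=
  ∃ (B : Set (ι → ChaconX)) (ℓ : ℕ),
    (∀ j : ℕ, j ≤ ℓ → IsNBox ι n (chaconTdZ ι (j : ℤ) '' B)) ∧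
    ¬ chaconTdZ ι (-1) '' B ⊆ chaconCd ι n ∧
    ¬ chaconTdZ ι ((ℓ : ℤ) + 1) '' B ⊆ chaconCd ι n ∧
    D = ⋃ j ∈ Finset.range (ℓ + 1), chaconTdZ ι (j : ℤ) '' B

/-- A measure is boundedly finite if bounded (measurable) sets have finite measure. -/
def BoundedlyFinite {α : Type*} [MeasurableSpace α] [PseudoMetricSpace α]
    (σ : Measure α) : Prop :=
  ∀ A : Set α, MeasurableSet A → Bornology.IsBounded A → σ A < ⊤

/-- Diagonal measures on `X^ι`: boundedly finite, `T^{×ι}`-invariant measures which are,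
for every large enough `n`, concentrated on a single `n`-diagonal inside `Cₙ^ι`. -/
def IsDiagonalMeasure (ι : Type) [Fintype ι] (σ : Measure (ι → ChaconX)) : Prop :=
  BoundedlyFinite σ ∧ σ.map (chaconTd ι) = σ ∧
    ∃ n₀ : ℕ, 1 ≤ n₀ ∧ ∀ n, n₀ ≤ n →
      ∃ D : Set (ι → ChaconX), IsNDiagonal ι n D ∧ σ (chaconCd ι n \ D) = 0

/-- A wandering set for the `ℤ`-action `Uz`. -/
def ZWandering {α : Type*} (Uz : ℤ → α → α) (W : Set α) : Prop :=
  ∀ j k : ℤ, j ≠ k → Disjoint (Uz j '' W) (Uz k '' W)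

/-- Conservativity: every measurable wandering set is null. -/
def ZConservative {α : Type*} [MeasurableSpace α] (σ : Measure α) (Uz : ℤ → α → α) : Prop :=
  ∀ W : Set α, MeasurableSet W → ZWandering Uz W → σ W = 0

/-- Total dissipativity: mod `σ`, the space is the disjoint union of the iterates of a
wandering set. -/
def ZTotallyDissipative {α : Type*} [MeasurableSpace α] (σ : Measure α)
    (Uz : ℤ → α → α) : Prop :=
  ∃ W : Set α, MeasurableSet W ∧ ZWandering Uz W ∧ σ ((⋃ j : ℤ, Uz j '' W)ᶜ) = 0

/-- Ergodicity of a (not necessarily finite) invariant measure: every invariant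
measurable set is null or conull. -/
def MeasErgodic {α : Type*} [MeasurableSpace α] (σ : Measure α) (U : α → α) : Prop :=
  ∀ A : Set α, MeasurableSet A → U ⁻¹' A = A → σ A = 0 ∨ σ Aᶜ = 0

/-- `Icc a b` is an `n`-crossing for `x`: a maximal finite set of consecutive integers `j`
with `(T^{×ι})^j x ∈ Cₙ^ι`. -/
def IsCrossing (ι : Type) (n : ℕ) (x : ι → ChaconX) (a b : ℤ) : Prop :=
  a ≤ b ∧ (∀ j : ℤ, a ≤ j → j ≤ b → chaconTdZ ι j x ∈ chaconCd ι n) ∧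
    chaconTdZ ι (a - 1) x ∉ chaconCd ι n ∧ chaconTdZ ι (b + 1) x ∉ chaconCd ι n

/-- `n(x)`: the smallest `n ≥ 1` with `x ∈ Cₙ^ι`. -/
def chaconNOf (ι : Type) (x : ι → ChaconX) : ℕ :=
  if h : ∃ n : ℕ, 1 ≤ n ∧ x ∈ chaconCd ι n then Nat.find h else 0

/-- `B(τ)`: the points of `B` whose coordinate `i` lies in subcolumn `τ i` of tower `n`. -/
def chaconBoxTau (ι : Type) (n : ℕ) (B : Set (ι → ChaconX)) (τ : ι → ℕ) :
    Set (ι → ChaconX) :=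
  {x ∈ B | ∀ i, chaconTn n (x i) = τ i}

/-- The transition from the `n`-diagonal `D` to the `(n+1)`-diagonal `D'` is the central
one, i.e. `D' = D(1,…,1)`. -/
def CentralTransition (ι : Type) (n : ℕ) (D D' : Set (ι → ChaconX)) : Prop :=
  ∀ B : Set (ι → ChaconX), IsNBox ι n B → B ⊆ D →
    chaconBoxTau ι n B (fun _ => 1) ⊆ D'

/-- The `n`-diagonal containing a given set (junk value `∅` if there is none). -/
def diagOfBox (ι : Type) (n : ℕ) (B : Set (ι → ChaconX)) : Set (ι → ChaconX) :=
  if h : ∃ D, IsNDiagonal ι n D ∧ B ⊆ D then h.choose else ∅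

/-- `D(τ)`: the `(n+1)`-diagonal containing `B(τ)` for an `n`-box `B ⊆ D`. -/
def diagTau (ι : Type) (n : ℕ) (D : Set (ι → ChaconX)) (τ : ι → ℕ) : Set (ι → ChaconX) :=
  if h : ∃ B, IsNBox ι n B ∧ B ⊆ D then diagOfBox ι (n + 1) (chaconBoxTau ι n h.choose τ)
  else ∅

/-- A consistent family of diagonals `(Dₙ)_{n ≥ n₀}`. -/
def IsConsistentFamily (ι : Type) (n₀ : ℕ) (D : ℕ → Set (ι → ChaconX)) : Prop :=
  (∀ n, n₀ ≤ n → IsNDiagonal ι n (D n)) ∧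
    (chaconCd ι (n₀ - 1) ∩ ⋂ n, ⋂ (_ : n₀ ≤ n), D n).Nonempty ∧
    ∀ n, n₀ ≤ n → D (n + 1) ∩ chaconCd ι n ⊆ D n

/-- `x` is seen by the family of diagonals `(Dₙ)_{n ≥ n₀}`. -/
def SeenByFam (ι : Type) (n₀ : ℕ) (D : ℕ → Set (ι → ChaconX)) (x : ι → ChaconX) : Prop :=
  ∀ n, n₀ ≤ n → x ∉ chaconCd ι n ∨ x ∈ D n

/-- Graph joinings arising from powers of `T`:
`σ(A₁ × ⋯ × A_d) = α μ(T^{-k₁}A₁ ∩ ⋯ ∩ T^{-k_d}A_d)` for some `0 < α < ∞`. -/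
def IsGraphJoining (ι : Type) [Fintype ι] (σ : Measure (ι → ChaconX)) : Prop :=
  ∃ (α : ℝ≥0∞) (k : ι → ℤ), 0 < α ∧ α ≠ ⊤ ∧
    ∀ A : ι → Set ChaconX, (∀ i, MeasurableSet (A i)) →
      σ (Set.univ.pi A) = α * chaconMu (⋂ i, chaconTZ (k i) ⁻¹' A i)

/-- Ergodic components of `σ`: the nonzero boundedly finite `T^{×ι}`-invariant ergodic
measures, absolutely continuous with respect to `σ`, which appear in its ergodic
decomposition. -/
def IsErgodicComponent (ι : Type) [Fintype ι] (σ ρ : Measure (ι → ChaconX)) : Prop :=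
  ρ ≠ 0 ∧ BoundedlyFinite ρ ∧ ρ.map (chaconTd ι) = ρ ∧ MeasErgodic ρ (chaconTd ι) ∧ ρ ≪ σ

end

/-! ### Combinatorics of the towers -/

def chSig : ℕ → ℕ → ℕ
  | 0, _ => 0
  | n + 1, k =>
      if k < chaconH n then 3 * chSig n k
      else if k < 2 * chaconH n then 3 * chSig n (k - chaconH n) + 1
      else if k = 2 * chaconH n then 3 * chaconH n
      else if k ≤ 3 * chaconH n then 3 * chSig n (k - 2 * chaconH n - 1) + 2
      else k

def chOff (n t : ℕ) : ℕ := if t = 0 then 0 else if t = 1 then chaconH n else 2 * chaconH n + 1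

theorem chH_pos (n : ℕ) : 0 < chaconH n := by
  cases n <;> simp [chaconH]

theorem chH_succ (n : ℕ) : chaconH (n + 1) = 6 * chaconH n + 2 := by
  simp [chaconH]; ring

theorem chH_even (n : ℕ) (hn : 1 ≤ n) : 2 * (chaconH n / 2) = chaconH n := by
  obtain ⟨m, rfl⟩ : ∃ m, n = m + 1 := ⟨n - 1, by omega⟩
  rw [chH_succ]; omega

theorem chL_eq (n k : ℕ) : chaconL n k = (chSig n k : ℝ) * (3 : ℝ)⁻¹ ^ n := by
  induction n generalizing k with
  | zero => simp [chaconL, chSig]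
  | succ n ih =>
    unfold chaconL chSig
    have h3 : (3 : ℝ)⁻¹ ^ n = 3 * (3 : ℝ)⁻¹ ^ (n + 1) := by rw [pow_succ]; ring
    split_ifs <;> (try rw [ih]) <;> push_cast <;> rw [h3] <;> ring

theorem chSig_off (n t k : ℕ) (ht : t < 3) (hk : k < chaconH n) :
    chSig (n + 1) (chOff n t + k) = 3 * chSig n k + t := by
  unfold chOff
  rcases (by omega : t = 0 ∨ t = 1 ∨ t = 2) with rfl | rfl | rfl
  · simp [chSig, hk]
  · have h1 : ¬ (chaconH n + k < chaconH n) := by omega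
    have h2 : chaconH n + k < 2 * chaconH n := by omega
    simp [chSig, h2]
  · have h1 : ¬ (2 * chaconH n + 1 + k < chaconH n) := by omega
    have h2 : ¬ (2 * chaconH n + 1 + k < 2 * chaconH n) := by omega
    have h3 : ¬ (2 * chaconH n + 1 + k = 2 * chaconH n) := by omega
    have h4 : 2 * chaconH n + 1 + k ≤ 3 * chaconH n := by omega
    have h5 : 2 * chaconH n + 1 + k - 2 * chaconH n - 1 = k := by omega
    show chSig (n + 1) (2 * chaconH n + 1 + k) = _
    rw [chSig, if_neg h1, if_neg h2, if_neg h3, if_pos h4, h5]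

theorem chSig_surj (n s : ℕ) (hs : s < chaconH n) : ∃ k, k < chaconH n ∧ chSig n k = s := by
  induction n generalizing s with
  | zero => 
    have : s = 0 := by simp [chaconH] at hs; exact hs
    exact ⟨0, by simp [chaconH], by simp [chSig, this]⟩
  | succ n ih =>
    rw [chH_succ] at hs ⊢
    by_cases h : s < 3 * chaconH n
    · obtain ⟨k, hk, hks⟩ := ih (s / 3) (by omega)
      refine ⟨chOff n (s % 3) + k, ?_, ?_⟩
      · unfold chOff; split_ifs <;> omega
      · rw [chSig_off n _ k (by omega) hk, hks]; omega
    · have := chH_pos n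
      by_cases h' : s = 3 * chaconH n
      · refine ⟨2 * chaconH n, by omega, ?_⟩
        simp [chSig, h']; omega
      · refine ⟨s, by omega, ?_⟩
        have h1 : ¬ (s < chaconH n) := by omega
        have h2 : ¬ (s < 2 * chaconH n) := by omega
        have h3 : ¬ (s = 2 * chaconH n) := by omega
        have h4 : ¬ (s ≤ 3 * chaconH n) := by omega
        simp [chSig, h1, h2, h3, h4]

theorem chSig_inj (n k k' : ℕ) (hk : k < chaconH n) (hk' : k' < chaconH n)
    (h : chSig n k = chSig n k') : k = k' := by
  choose! f hf hfs using chSig_surj n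
  have h1 : Set.SurjOn f (Finset.range (chaconH n)) (Finset.range (chaconH n)) := by
    apply Finset.surjOn_of_injOn_of_card_le
    · intro s hs; simp at hs ⊢; exact hf s hs
    · intro a ha b hb hab
      simp at ha hb
      rw [← hfs a ha, ← hfs b hb, hab]
    · simp
  obtain ⟨a, ha, rfl⟩ := h1 (by simpa using hk)
  obtain ⟨b, hb, rfl⟩ := h1 (by simpa using hk')
  simp at ha hb
  rw [hfs a ha, hfs b hb] at h
  rw [h]

/-- `x` lies in level `k` of tower `n`. -/
def InLv (n k : ℕ) (x : ℝ) : Prop := k < chaconH n ∧ x ∈ chaconLevel n k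

theorem mem_level_iff (n k : ℕ) (x : ℝ) :
    x ∈ chaconLevel n k ↔ (chSig n k : ℝ) ≤ x * 3 ^ n ∧ x * 3 ^ n < chSig n k + 1 := by
  unfold chaconLevel
  rw [chL_eq, mem_Ico]
  have h3 : (0 : ℝ) < 3 ^ n := by positivity
  have e : (3 : ℝ)⁻¹ ^ n = 1 / 3 ^ n := by rw [inv_pow, one_div]
  rw [e]
  constructor
  · rintro ⟨h1, h2⟩
    constructor
    · rw [mul_one_div, div_le_iff₀ h3] at h1; exact h1
    · rw [mul_one_div, ← add_div, lt_div_iff₀ h3] at h2; exact h2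
  · rintro ⟨h1, h2⟩
    constructor
    · rw [mul_one_div, div_le_iff₀ h3]; exact h1
    · rw [mul_one_div, ← add_div, lt_div_iff₀ h3]; exact h2

theorem InLv.uniq {n k k' : ℕ} {x : ℝ} (h : InLv n k x) (h' : InLv n k' x) : k = k' := by
  obtain ⟨hk, h⟩ := h
  obtain ⟨hk', h'⟩ := h'
  rw [mem_level_iff] at h h'
  apply chSig_inj n k k' hk hk'
  have h1 : (chSig n k : ℝ) < chSig n k' + 1 := by linarith [h.1, h'.2]
  have h2 : (chSig n k' : ℝ) < chSig n k + 1 := by linarith [h'.1, h.2]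
  norm_cast at h1 h2
  omega

theorem InLv.ex {n : ℕ} {x : ℝ} (hx : 0 ≤ x) (h : x * 3 ^ n < chaconH n) : ∃ k, InLv n k x := by
  have h0 : 0 ≤ x * 3 ^ n := by positivity
  obtain ⟨k, hk, hks⟩ := chSig_surj n ⌊x * 3 ^ n⌋₊ (by rw [Nat.floor_lt h0]; exact h)
  refine ⟨k, hk, ?_⟩
  rw [mem_level_iff, hks]
  exact ⟨Nat.floor_le h0, Nat.lt_floor_add_one _⟩

theorem chL_off (n t k : ℕ) (ht : t < 3) (hk : k < chaconH n) :
    chaconL (n + 1) (chOff n t + k) = chaconL n k + t * (3 : ℝ)⁻¹ ^ (n + 1) := by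
  rw [chL_eq, chL_eq, chSig_off n t k ht hk, pow_succ]; push_cast; ring

theorem chOff_lt (n t k : ℕ) (hk : k < chaconH n) : chOff n t + k + 1 < chaconH (n + 1) := by
  rw [chH_succ]; unfold chOff; split_ifs <;> omega

theorem InLv.step {n k : ℕ} {x : ℝ} (h : InLv n k x) :
    ∃ t, t < 3 ∧ InLv (n + 1) (chOff n t + k) x := by
  obtain ⟨hk, h⟩ := h
  rw [mem_level_iff] at h
  have e : x * 3 ^ (n + 1) = 3 * (x * 3 ^ n) := by ring
  have key : ∀ t : ℕ, t < 3 → (3 * (chSig n k : ℝ) + t ≤ x * 3 ^ (n + 1)) →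
      x * 3 ^ (n + 1) < 3 * (chSig n k : ℝ) + t + 1 → InLv (n + 1) (chOff n t + k) x := by
    intro t ht h1 h2
    refine ⟨by have := chOff_lt n t k hk; omega, ?_⟩
    rw [mem_level_iff, chSig_off n t k ht hk]
    push_cast
    exact ⟨h1, h2⟩
  by_cases c1 : x * 3 ^ (n + 1) < 3 * (chSig n k : ℝ) + 1
  · exact ⟨0, by norm_num, key 0 (by norm_num) (by push_cast; linarith [h.1]) (by push_cast; linarith)⟩
  by_cases c2 : x * 3 ^ (n + 1) < 3 * (chSig n k : ℝ) + 2
  · exact ⟨1, by norm_num, key 1 (by norm_num) (by push_cast; linarith [h.1]) (by push_cast; linarith)⟩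
  · exact ⟨2, by norm_num, key 2 (by norm_num) (by push_cast; linarith [h.1])
      (by push_cast; linarith [h.2])⟩

theorem InLv.up {n k : ℕ} {x : ℝ} (h : InLv n k x) (hk : k + 1 < chaconH n) (n' : ℕ) (hn : n ≤ n') :
    ∃ k', InLv n' k' x ∧ k' + 1 < chaconH n' ∧
      chaconL n' (k' + 1) - chaconL n' k' = chaconL n (k + 1) - chaconL n k := by
  induction n', hn using Nat.le_induction with
  | base => exact ⟨k, h, hk, rfl⟩
  | succ n' hn ih =>
    obtain ⟨k', h', hk', e⟩ := ih
    obtain ⟨t, ht, hs⟩ := h'.step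
    refine ⟨_, hs, chOff_lt n' t k' h'.1, ?_⟩
    rw [add_assoc, chL_off n' t _ ht hk', chL_off n' t _ ht h'.1, ← e]; ring

theorem chaconT0_eq {n k : ℕ} {x : ℝ} (h : InLv n k x) (hk : k + 1 < chaconH n) :
    chaconT0 x = x - chaconL n k + chaconL n (k + 1) := by
  have hex : ∃ p : ℕ × ℕ, p.2 + 1 < chaconH p.1 ∧ x ∈ chaconLevel p.1 p.2 := ⟨(n, k), hk, h.2⟩
  unfold chaconT0
  rw [dif_pos hex]
  obtain ⟨h1, h2⟩ := hex.choose_spec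
  obtain ⟨a, ha, ha', ea⟩ := h.up hk (max n hex.choose.1) (le_max_left _ _)
  obtain ⟨b, hb, hb', eb⟩ := InLv.up (n := hex.choose.1) (k := hex.choose.2) (x := x)
    ⟨by omega, h2⟩ h1 (max n hex.choose.1) (le_max_right _ _)
  have := ha.uniq hb
  subst this
  linarith

theorem InLv.nonneg {n k : ℕ} {x : ℝ} (h : InLv n k x) : 0 ≤ x := by
  have := ((mem_level_iff n k x).1 h.2).1
  have h3 : (0 : ℝ) < 3 ^ n := by positivity
  by_contra hx
  push Not at hx
  have : x * 3 ^ n < 0 := mul_neg_of_neg_of_pos hx h3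
  have h0 : (0 : ℝ) ≤ chSig n k := by positivity
  linarith

theorem mem_level_shift {n k j : ℕ} {x : ℝ} (h : x ∈ chaconLevel n k) :
    x - chaconL n k + chaconL n j ∈ chaconLevel n j := by
  unfold chaconLevel at *
  rw [mem_Ico] at *
  constructor <;> linarith [h.1, h.2]

theorem chaconT_val {n k : ℕ} {x : ChaconX} (h : InLv n k x) (hk : k + 1 < chaconH n) :
    (chaconT x : ℝ) = x - chaconL n k + chaconL n (k + 1) := by
  unfold chaconT
  have e := chaconT0_eq h hk
  have : InLv n (k + 1) (x - chaconL n k + chaconL n (k + 1)) := ⟨hk, mem_level_shift h.2⟩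
  simp only [e]
  exact max_eq_right this.nonneg

theorem chaconT_iter {n k : ℕ} {x : ChaconX} (h : InLv n k x) (j : ℕ) (hk : k + j < chaconH n) :
    (chaconT^[j] x : ℝ) = x - chaconL n k + chaconL n (k + j) := by
  induction j with
  | zero => simp
  | succ j ih =>
    have ih := ih (by omega)
    rw [Function.iterate_succ_apply']
    have h' : InLv n (k + j) (chaconT^[j] x : ChaconX) := by
      refine ⟨by omega, ?_⟩
      rw [ih]; exact mem_level_shift h.2
    rw [chaconT_val h' (by omega), ih]
    rw [← add_assoc k j 1]; ring

theorem InLv.iter {n k : ℕ} {x : ChaconX} (h : InLv n k x) (j : ℕ) (hk : k + j < chaconH n) :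
    InLv n (k + j) (chaconT^[j] x : ChaconX) := by
  refine ⟨hk, ?_⟩
  rw [chaconT_iter h j hk]; exact mem_level_shift h.2

theorem chH_growth (n : ℕ) : (2 : ℝ) ^ n * 3 ^ n ≤ chaconH n := by
  induction n with
  | zero => simp [chaconH]
  | succ n ih => 
    rw [chH_succ, pow_succ, pow_succ]; push_cast; linarith

theorem tower_cover (x : ChaconX) :
    ∃ N, ∀ n, N ≤ n → ∃ k, InLv n k x ∧ k + 1 < chaconH n := by
  obtain ⟨N, hN⟩ := pow_unbounded_of_one_lt (x : ℝ) (by norm_num : (1 : ℝ) < 2)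
  have hx : (0 : ℝ) ≤ x := x.2
  obtain ⟨k, hk⟩ := InLv.ex (n := N) hx (lt_of_lt_of_le (by gcongr) (chH_growth N))
  obtain ⟨t, ht, hs⟩ := hk.step
  refine ⟨N + 1, fun n hn => ?_⟩
  obtain ⟨k', h1, h2, -⟩ := hs.up (chOff_lt N t k hk.1) n hn
  exact ⟨k', h1, h2⟩

theorem chaconT_inj : Function.Injective chaconT := by
  intro x y hxy
  obtain ⟨N, hN⟩ := tower_cover x
  obtain ⟨M, hM⟩ := tower_cover y
  obtain ⟨k, hk, hk'⟩ := hN (max N M) (le_max_left _ _)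
  obtain ⟨l, hl, hl'⟩ := hM (max N M) (le_max_right _ _)
  have h1 := hk.iter 1 hk'
  have h2 := hl.iter 1 hl'
  simp only [Function.iterate_one] at h1 h2
  rw [hxy] at h1
  have := h1.uniq h2
  have hkl : k = l := by omega
  subst hkl
  have e1 := chaconT_val hk hk'
  have e2 := chaconT_val hl hl'
  rw [hxy, e2] at e1
  apply Subtype.ext
  linarith

theorem chaconTinv_T (x : ChaconX) : chaconTinv (chaconT x) = x := by
  obtain ⟨N, hN⟩ := tower_cover x
  obtain ⟨k, hk, hk'⟩ := hN N le_rfl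
  have h1 := hk.iter 1 hk'
  simp only [Function.iterate_one] at h1
  set y := chaconT x with hy
  have hex : ∃ p : ℕ × ℕ, p.2 + 1 < chaconH p.1 ∧ (y : ℝ) ∈ chaconLevel p.1 (p.2 + 1) :=
    ⟨(N, k), hk', h1.2⟩
  obtain ⟨h2, h3⟩ := hex.choose_spec
  set p := hex.choose with hp
  have hz : InLv p.1 p.2 (y - chaconL p.1 (p.2 + 1) + chaconL p.1 p.2) :=
    ⟨by omega, mem_level_shift h3⟩
  have e : chaconT0inv y = y - chaconL p.1 (p.2 + 1) + chaconL p.1 p.2 := by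
    unfold chaconT0inv
    rw [dif_pos hex]
  let z : ChaconX := ⟨_, hz.nonneg⟩
  have hz' : InLv p.1 p.2 z := hz
  have hzT : chaconT z = y := by
    apply Subtype.ext
    rw [chaconT_val hz' h2]
    simp [z]
  have : z = x := chaconT_inj (by rw [hzT])
  rw [← this]
  apply Subtype.ext
  simp only [chaconTinv, e, z]
  exact max_eq_right hz.nonneg

theorem chaconTinv_iter (k : ℕ) (x : ChaconX) : chaconTinv^[k] (chaconT^[k] x) = x :=
  Function.LeftInverse.iterate chaconTinv_T k x

theorem level_meas (n k : ℕ) : MeasurableSet (chaconLevel n k) := measurableSet_Ico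

theorem chaconT_meas : Measurable chaconT := by
  intro B hB
  have : chaconT ⁻¹' B = ⋃ n : ℕ, ⋃ k : ℕ, ⋃ (_ : k + 1 < chaconH n),
      {x : ChaconX | (x : ℝ) ∈ chaconLevel n k ∧
        (x : ℝ) - chaconL n k + chaconL n (k + 1) ∈ Subtype.val '' B} := by
    ext x
    simp only [mem_preimage, mem_iUnion, mem_ofPred_eq]
    constructor
    · intro hx
      obtain ⟨N, hN⟩ := tower_cover x
      obtain ⟨k, hk, hk'⟩ := hN N le_rfl
      exact ⟨N, k, hk', hk.2, _, hx, chaconT_val hk hk'⟩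
    · rintro ⟨n, k, hk, h1, y, hy, e⟩
      have : chaconT x = y := by
        apply Subtype.ext
        rw [e, chaconT_val ⟨by omega, h1⟩ hk]
      rw [this]; exact hy
  rw [this]
  have hB' : MeasurableSet (Subtype.val '' B : Set ℝ) := measurableSet_Ici.subtype_image hB
  refine MeasurableSet.iUnion fun n => MeasurableSet.iUnion fun k => MeasurableSet.iUnion fun _ => ?_
  refine MeasurableSet.inter ?_ ?_
  · exact measurable_subtype_coe (level_meas n k)
  · exact ((measurable_subtype_coe.sub_const _).add_const _) hB'

/-! ### Lebesgue density along levels -/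

theorem level_density (A : Set ℝ) (hAm : MeasurableSet A) (hA : A ⊆ Ici 0) (hpos : volume A ≠ 0)
    (c : ℝ≥0∞) (hc : c < 1) :
    ∃ N, ∀ n, N ≤ n → ∃ k, k < chaconH n ∧
      c * ENNReal.ofReal ((3 : ℝ)⁻¹ ^ n) < volume (A ∩ chaconLevel n k) := by
  have h1 := IsUnifLocDoublingMeasure.ae_tendsto_measure_inter_div (μ := (volume : Measure ℝ)) A 1
  have h2 : ∀ᵐ x ∂(volume.restrict A), x ∈ A := ae_restrict_mem hAm
  have : Filter.NeBot (ae (volume.restrict A)) := by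
    rw [ae_neBot]
    intro h
    rw [Measure.restrict_eq_zero] at h
    exact hpos h
  obtain ⟨x, hx, hxA⟩ := (h1.and h2).exists
  obtain ⟨N0, hN0⟩ := tower_cover ⟨x, hA hxA⟩
  choose! k hk hk' using hN0
  have hx := hx (ι := ℕ) (l := Filter.atTop) (fun n => chaconL n (k n) + (3 : ℝ)⁻¹ ^ n / 2)
    (fun n => (3 : ℝ)⁻¹ ^ n / 2) ?_ ?_
  · have h3 := hx.eventually (lt_mem_nhds hc)
    obtain ⟨N, hN⟩ := Filter.eventually_atTop.1 (h3.and (Filter.eventually_ge_atTop N0))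
    refine ⟨N, fun n hnN => ?_⟩
    obtain ⟨hn, hn1⟩ := hN n hnN
    refine ⟨k n, (hk n hn1).1, ?_⟩
    have e : Metric.closedBall (chaconL n (k n) + (3 : ℝ)⁻¹ ^ n / 2) ((3 : ℝ)⁻¹ ^ n / 2)
        = Icc (chaconL n (k n)) (chaconL n (k n) + (3 : ℝ)⁻¹ ^ n) := by
      rw [Real.closedBall_eq_Icc]; congr 1 <;> ring
    have e2 : volume (A ∩ Icc (chaconL n (k n)) (chaconL n (k n) + (3 : ℝ)⁻¹ ^ n))
        = volume (A ∩ chaconLevel n (k n)) := by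
      apply measure_congr
      exact (Filter.EventuallyEq.refl _ A).inter Ico_ae_eq_Icc.symm
    rw [e, e2, Real.volume_Icc, add_sub_cancel_left] at hn
    rw [ENNReal.lt_div_iff_mul_lt] at hn
    · exact hn
    · left; simp
    · left; simp
  · rw [tendsto_nhdsWithin_iff]
    constructor
    · have := (tendsto_pow_atTop_nhds_zero_of_lt_one (r := (3 : ℝ)⁻¹) (by norm_num)
        (by norm_num)).div_const 2
      simpa using this
    · exact Filter.Eventually.of_forall fun n => by simp
  · filter_upwards [Filter.eventually_ge_atTop N0] with n hn
    have := (hk n hn).2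
    unfold chaconLevel at this
    rw [mem_Ico] at this
    rw [one_mul, Real.closedBall_eq_Icc, mem_Icc]
    constructor <;> linarith [this.1, this.2]

/-! ### Counting visits -/

noncomputable def cnt (A : Set ℝ) (n0 : ℕ) (b : ℝ) : ℕ → ℝ → ℕ
  | 0, u => if b + u ∈ A then 1 else 0
  | r + 1, u => cnt A n0 b r u + cnt A n0 b r (u + (3 : ℝ)⁻¹ ^ (n0 + r + 1))
      + cnt A n0 b r (u + 2 * (3 : ℝ)⁻¹ ^ (n0 + r + 1))

theorem cnt_meas (A : Set ℝ) (hA : MeasurableSet A) (n0 : ℕ) (b : ℝ) (r : ℕ) :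
    Measurable (cnt A n0 b r) := by
  induction r with
  | zero =>
    show Measurable (fun u => if b + u ∈ A then 1 else 0)
    refine Measurable.ite ?_ measurable_const measurable_const
    exact (measurable_const_add b) hA
  | succ r ih =>
    show Measurable (fun u => cnt A n0 b r u + cnt A n0 b r (u + (3 : ℝ)⁻¹ ^ (n0 + r + 1))
      + cnt A n0 b r (u + 2 * (3 : ℝ)⁻¹ ^ (n0 + r + 1)))
    exact (ih.add (ih.comp (measurable_add_const _))).add (ih.comp (measurable_add_const _))

theorem cnt_le (A : Set ℝ) (n0 : ℕ) (b : ℝ) (r : ℕ) (u : ℝ) : cnt A n0 b r u ≤ 3 ^ r := by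
  induction r generalizing u with
  | zero => unfold cnt; split_ifs <;> simp
  | succ r ih =>
    unfold cnt
    have h1 := ih u
    have h2 := ih (u + (3 : ℝ)⁻¹ ^ (n0 + r + 1))
    have h3 := ih (u + 2 * (3 : ℝ)⁻¹ ^ (n0 + r + 1))
    rw [pow_succ 3 r]; omega

theorem setLIntegral_Ico_shift (f : ℝ → ℝ≥0∞) (hf : Measurable f) (a b c : ℝ) :
    ∫⁻ u in Ico a b, f (u + c) = ∫⁻ u in Ico (a + c) (b + c), f u := by
  have := (measurePreserving_add_right (volume : Measure ℝ) c).setLIntegral_comp_preimage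
    (s := Ico (a + c) (b + c)) measurableSet_Ico hf
  rw [← this]
  congr 2
  simp

theorem lintegral_three (f : ℝ → ℝ≥0∞) (hf : Measurable f) (d : ℝ) (hd : 0 < d) :
    ∫⁻ u in Ico 0 (3 * d), f u = ∫⁻ u in Ico 0 d, (f u + f (u + d) + f (u + 2 * d)) := by
  rw [lintegral_add_left (by fun_prop), lintegral_add_left (by fun_prop),
    setLIntegral_Ico_shift f hf, setLIntegral_Ico_shift f hf]
  have e : Ico 0 (3 * d) = (Ico 0 d ∪ Ico d (2 * d)) ∪ Ico (2 * d) (3 * d) := by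
    rw [Ico_union_Ico_eq_Ico hd.le (by linarith), Ico_union_Ico_eq_Ico (by linarith) (by linarith)]
  rw [e, lintegral_union measurableSet_Ico, lintegral_union measurableSet_Ico]
  · have e1 : 0 + d = d := by ring
    have e2 : d + d = 2 * d := by ring
    have e3 : 0 + 2 * d = 2 * d := by ring
    have e4 : d + 2 * d = 3 * d := by ring
    rw [e1, e2, e3, e4]
  · rw [Set.disjoint_left]; intro x hx hy; exact absurd hx.2 (not_lt.2 hy.1)
  · rw [Set.disjoint_left]; intro x hx hy
    rw [Ico_union_Ico_eq_Ico hd.le (by linarith)] at hx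
    exact absurd hx.2 (not_lt.2 hy.1)

theorem cnt_integral (A : Set ℝ) (hA : MeasurableSet A) (n0 : ℕ) (b : ℝ) (r : ℕ) :
    ∫⁻ u in Ico 0 ((3 : ℝ)⁻¹ ^ (n0 + r)), (cnt A n0 b r u : ℝ≥0∞)
      = volume (A ∩ Ico b (b + (3 : ℝ)⁻¹ ^ n0)) := by
  induction r with
  | zero =>
    have hf : Measurable (A.indicator (1 : ℝ → ℝ≥0∞)) := measurable_one.indicator hA
    have := setLIntegral_Ico_shift _ hf 0 ((3 : ℝ)⁻¹ ^ n0) b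
    rw [zero_add, add_comm _ b] at this
    rw [lintegral_indicator_one hA, Measure.restrict_apply hA] at this
    rw [← this]
    simp only [add_zero]
    congr 1
    ext u
    simp [cnt, Set.indicator_apply, add_comm]
  | succ r ih =>
    have h3 : (3 : ℝ)⁻¹ ^ (n0 + r) = 3 * (3 : ℝ)⁻¹ ^ (n0 + r + 1) := by rw [pow_succ]; ring
    rw [← ih, h3, lintegral_three _ _ _ (by positivity), add_assoc]
    · simp only [cnt, ← add_assoc, Nat.cast_add]
    · exact (measurable_of_countable _).comp (cnt_meas A hA n0 b r)

/-- The column over `u` in tower `n` does not visit `A`. -/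
def EmpCol (A : Set ℝ) (n : ℕ) (u : ℝ) : Prop := ∀ i, i < chaconH n → chaconL n i + u ∉ A

def BadCol (A : Set ℝ) (n : ℕ) (u : ℝ) : Prop :=
  ∃ t : ℕ, t < 3 ∧ EmpCol A n (u + t * (3 : ℝ)⁻¹ ^ (n + 1))

def BadX (A : Set ℝ) (n : ℕ) : Set ℝ :=
  {x | ∃ i, i < chaconH (n + 1) ∧ x ∈ chaconLevel (n + 1) i ∧ BadCol A n (x - chaconL (n + 1) i)}

def GoodS (A : Set ℝ) (n0 : ℕ) : ℕ → Set ℝ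
  | 0 => A
  | r + 1 => GoodS A n0 r \ BadX A (n0 + r)

theorem EmpCol_meas (A : Set ℝ) (hA : MeasurableSet A) (n : ℕ) :
    MeasurableSet {u | EmpCol A n u} := by
  have : {u | EmpCol A n u} = ⋂ i, ⋂ (_ : i < chaconH n), (fun u => chaconL n i + u) ⁻¹' Aᶜ := by
    ext u; simp [EmpCol]
  rw [this]
  exact MeasurableSet.iInter fun i => MeasurableSet.iInter fun _ => (measurable_const_add _) hA.compl

theorem BadX_meas (A : Set ℝ) (hA : MeasurableSet A) (n : ℕ) : MeasurableSet (BadX A n) := by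
  have : BadX A n = ⋃ i, ⋃ (_ : i < chaconH (n + 1)), (chaconLevel (n + 1) i ∩
      ⋃ t : ℕ, ⋃ (_ : t < 3), (fun x => x - chaconL (n + 1) i + t * (3 : ℝ)⁻¹ ^ (n + 1)) ⁻¹'
        {u | EmpCol A n u}) := by
    ext x
    simp only [BadX, BadCol, mem_ofPred_eq, mem_iUnion, mem_inter_iff, mem_preimage, exists_prop]
  rw [this]
  refine MeasurableSet.iUnion fun i => MeasurableSet.iUnion fun _ => (level_meas _ _).inter
    (MeasurableSet.iUnion fun t => MeasurableSet.iUnion fun _ => ?_)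
  exact ((measurable_id.sub_const _).add_const _) (EmpCol_meas A hA n)

theorem GoodS_meas (A : Set ℝ) (hA : MeasurableSet A) (n0 r : ℕ) : MeasurableSet (GoodS A n0 r) := by
  induction r with
  | zero => exact hA
  | succ r ih => exact ih.diff (BadX_meas A hA _)

theorem cnt_congr (A B : Set ℝ) (n0 j0 : ℕ) (hj : j0 < chaconH n0) (r : ℕ) (u : ℝ)
    (h : ∀ i, i < chaconH (n0 + r) → (chaconL (n0 + r) i + u ∈ A ↔ chaconL (n0 + r) i + u ∈ B)) :
    cnt A n0 (chaconL n0 j0) r u = cnt B n0 (chaconL n0 j0) r u := by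
  induction r generalizing u with
  | zero =>
    unfold cnt
    have := h j0 hj
    simp only [add_zero] at this
    simp [this]
  | succ r ih =>
    have key : ∀ t : ℕ, t < 3 → ∀ i, i < chaconH (n0 + r) →
      (chaconL (n0 + r) i + (u + t * (3 : ℝ)⁻¹ ^ (n0 + r + 1)) ∈ A ↔
        chaconL (n0 + r) i + (u + t * (3 : ℝ)⁻¹ ^ (n0 + r + 1)) ∈ B) := by
      intro t ht i hi
      have := h (chOff (n0 + r) t + i) (by have := chOff_lt (n0 + r) t i hi; rw [← add_assoc]; omega)
      rw [← add_assoc, chL_off _ t i ht hi] at this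
      convert this using 2 <;> ring
    unfold cnt
    have k0 := ih _ (key 0 (by norm_num))
    have k1 := ih _ (key 1 (by norm_num))
    have k2 := ih _ (key 2 (by norm_num))
    simp only [Nat.cast_zero, zero_mul, add_zero, Nat.cast_one, one_mul, Nat.cast_ofNat] at k0 k1 k2
    rw [k0, k1, k2]

theorem cnt_empty (n0 : ℕ) (b : ℝ) (r : ℕ) (u : ℝ) : cnt ∅ n0 b r u = 0 := by
  induction r generalizing u with
  | zero => simp [cnt]
  | succ r ih => simp [cnt, ih]

theorem cnt_emp (A : Set ℝ) (n0 j0 : ℕ) (hj : j0 < chaconH n0) (r : ℕ) (u : ℝ)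
    (h : EmpCol A (n0 + r) u) : cnt A n0 (chaconL n0 j0) r u = 0 := by
  rw [← cnt_empty n0 (chaconL n0 j0) r u]
  apply cnt_congr A ∅ n0 j0 hj r u
  intro i hi
  simp [h i hi]

theorem cnt_main (A : Set ℝ) (n0 j0 : ℕ) (hj : j0 < chaconH n0) (r : ℕ) (u : ℝ)
    (hu : u ∈ Ico 0 ((3 : ℝ)⁻¹ ^ (n0 + r))) :
    4 * cnt A n0 (chaconL n0 j0) r u ≤ cnt (GoodS A n0 r) n0 (chaconL n0 j0) r u + 3 * 3 ^ r := by
  induction r generalizing u with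
  | zero =>
    have := cnt_le A n0 (chaconL n0 j0) 0 u
    simp only [GoodS]; omega
  | succ r ih =>
    have h3 : (3 : ℝ)⁻¹ ^ (n0 + r) = 3 * (3 : ℝ)⁻¹ ^ (n0 + r + 1) := by rw [pow_succ]; ring
    have hd : (0 : ℝ) < (3 : ℝ)⁻¹ ^ (n0 + r + 1) := by positivity
    rw [← add_assoc, mem_Ico] at hu
    by_cases hb : BadCol A (n0 + r) u
    · obtain ⟨t, ht, he⟩ := hb
      have h0 := cnt_emp A n0 j0 hj r _ he
      have l0 := cnt_le A n0 (chaconL n0 j0) r u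
      have l1 := cnt_le A n0 (chaconL n0 j0) r (u + (3 : ℝ)⁻¹ ^ (n0 + r + 1))
      have l2 := cnt_le A n0 (chaconL n0 j0) r (u + 2 * (3 : ℝ)⁻¹ ^ (n0 + r + 1))
      have : cnt A n0 (chaconL n0 j0) (r + 1) u ≤ 2 * 3 ^ r := by
        simp only [cnt]
        rcases (by omega : t = 0 ∨ t = 1 ∨ t = 2) with rfl | rfl | rfl <;>
        simp only [Nat.cast_zero, zero_mul, add_zero, Nat.cast_one, one_mul, Nat.cast_ofNat] at h0 <;>
        omega
      rw [pow_succ 3 r]; omega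
    · have e : cnt (GoodS A n0 (r + 1)) n0 (chaconL n0 j0) (r + 1) u
          = cnt (GoodS A n0 r) n0 (chaconL n0 j0) (r + 1) u := by
        apply cnt_congr _ _ n0 j0 hj
        intro i hi
        simp only [GoodS, mem_sdiff, and_iff_left_iff_imp]
        rintro - ⟨i', hi', hl, hbad⟩
        have hi2 : InLv (n0 + r + 1) i (chaconL (n0 + (r + 1)) i + u) := by
          refine ⟨hi, ?_⟩
          unfold chaconLevel
          rw [← add_assoc, mem_Ico]
          constructor <;> linarith [hu.1, hu.2]
        have := InLv.uniq hi2 ⟨hi', hl⟩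
        subst this
        apply hb
        convert hbad using 1
        rw [← add_assoc]; ring
      rw [e]
      have k0 := ih u (by rw [mem_Ico, h3]; constructor <;> linarith [hu.1, hu.2])
      have k1 := ih (u + (3 : ℝ)⁻¹ ^ (n0 + r + 1))
        (by rw [mem_Ico, h3]; constructor <;> linarith [hu.1, hu.2])
      have k2 := ih (u + 2 * (3 : ℝ)⁻¹ ^ (n0 + r + 1))
        (by rw [mem_Ico, h3]; constructor <;> linarith [hu.1, hu.2])
      simp only [cnt]
      rw [pow_succ 3 r]; omega

theorem good_measure (A : Set ℝ) (hA : MeasurableSet A) (n0 j0 : ℕ) (hj : j0 < chaconH n0) (r : ℕ) :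
    4 * volume (A ∩ chaconLevel n0 j0) ≤ volume (GoodS A n0 r ∩ chaconLevel n0 j0)
      + 3 * ENNReal.ofReal ((3 : ℝ)⁻¹ ^ n0) := by
  unfold chaconLevel
  rw [← cnt_integral A hA n0 _ r, ← cnt_integral _ (GoodS_meas A hA n0 r) n0 _ r]
  have e : 3 * ENNReal.ofReal ((3 : ℝ)⁻¹ ^ n0)
      = ∫⁻ _u in Ico 0 ((3 : ℝ)⁻¹ ^ (n0 + r)), ((3 * 3 ^ r : ℕ) : ℝ≥0∞) := by
    rw [setLIntegral_const, Real.volume_Ico, sub_zero, pow_add, ENNReal.ofReal_mul (by positivity)]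
    have : ((3 * 3 ^ r : ℕ) : ℝ≥0∞) = 3 * ENNReal.ofReal (3 ^ r) := by
      rw [ENNReal.ofReal_pow (by norm_num)]; push_cast; simp
    rw [this]
    have h1 : ENNReal.ofReal (3 ^ r) * ENNReal.ofReal ((3 : ℝ)⁻¹ ^ r) = 1 := by
      rw [← ENNReal.ofReal_mul (by positivity), ← mul_pow]; norm_num
    calc _ = 3 * ENNReal.ofReal ((3 : ℝ)⁻¹ ^ n0) * (ENNReal.ofReal (3 ^ r) * ENNReal.ofReal ((3 : ℝ)⁻¹ ^ r)) := by
          rw [h1, mul_one]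
      _ = _ := by ring
  have hm : Measurable fun u => (cnt A n0 (chaconL n0 j0) r u : ℝ≥0∞) :=
    (measurable_of_countable _).comp (cnt_meas A hA n0 _ r)
  have hm2 : Measurable fun u => (cnt (GoodS A n0 r) n0 (chaconL n0 j0) r u : ℝ≥0∞) :=
    (measurable_of_countable _).comp (cnt_meas _ (GoodS_meas A hA n0 r) n0 _ r)
  rw [e, ← lintegral_const_mul _ hm, ← lintegral_add_left hm2]
  apply setLIntegral_mono' measurableSet_Ico
  intro u hu
  have := cnt_main A n0 j0 hj r u hu
  exact_mod_cast this

theorem good_pos (A : Set ℝ) (hA : MeasurableSet A) (n0 j0 : ℕ) (hj : j0 < chaconH n0)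
    (h : 3 / 4 * ENNReal.ofReal ((3 : ℝ)⁻¹ ^ n0) < volume (A ∩ chaconLevel n0 j0)) :
    volume (⋂ r, GoodS A n0 r) ≠ 0 := by
  intro h0
  have hanti : Antitone fun r => GoodS A n0 r ∩ chaconLevel n0 j0 := by
    apply antitone_nat_of_succ_le
    intro r
    exact inter_subset_inter_left _ sdiff_subset
  have ht := tendsto_measure_iInter_atTop (μ := (volume : Measure ℝ))
    (fun r => ((GoodS_meas A hA n0 r).inter (level_meas n0 j0)).nullMeasurableSet) hanti
    ⟨0, ne_top_of_le_ne_top (b := volume (chaconLevel n0 j0)) (by simp [chaconLevel])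
      (measure_mono inter_subset_right)⟩
  have hz : volume (⋂ r, GoodS A n0 r ∩ chaconLevel n0 j0) = 0 :=
    measure_mono_null (iInter_mono fun r => inter_subset_left) h0
  rw [hz] at ht
  have hle : 4 * volume (A ∩ chaconLevel n0 j0) ≤ 0 + 3 * ENNReal.ofReal ((3 : ℝ)⁻¹ ^ n0) :=
    ge_of_tendsto' (ht.add_const _) (fun r => good_measure A hA n0 j0 hj r)
  rw [zero_add] at hle
  have h4 : 4 * (3 / 4 * ENNReal.ofReal ((3 : ℝ)⁻¹ ^ n0))
      < 4 * volume (A ∩ chaconLevel n0 j0) := by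
    gcongr <;> norm_num
  rw [← mul_assoc, ENNReal.mul_div_cancel (by norm_num) (by norm_num)] at h4
  exact absurd hle (not_le.2 h4)

/-! ### The dynamical argument -/

theorem halfH_succ (n : ℕ) : chaconH (n + 1) / 2 = 3 * chaconH n + 1 := by
  rw [chH_succ]; omega

theorem chaconC_up {m n : ℕ} (hmn : m ≤ n) {x : ChaconX} (hx : x ∈ chaconC m) :
    ∃ k, k < chaconH n / 2 ∧ InLv n k x := by
  induction n, hmn using Nat.le_induction with
  | base =>
    obtain ⟨k, hk, h⟩ := hx
    exact ⟨k, hk, by omega, h⟩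
  | succ n hn ih =>
    obtain ⟨k, hk, h⟩ := ih
    obtain ⟨t, ht, h'⟩ := h.step
    refine ⟨_, ?_, h'⟩
    have := h.1
    rw [halfH_succ]; unfold chOff; split_ifs <;> omega

theorem eq_of_levels (n0 : ℕ) (x y : ChaconX)
    (h : ∀ r, ∃ j, InLv (n0 + r) j x ∧ InLv (n0 + r) j y) : x = y := by
  apply Subtype.ext
  by_contra hne
  have hpos : 0 < |(x : ℝ) - y| := abs_pos.2 (sub_ne_zero.2 hne)
  obtain ⟨r, hr⟩ := exists_pow_lt_of_lt_one hpos (by norm_num : (3 : ℝ)⁻¹ < 1)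
  obtain ⟨j, hx, hy⟩ := h r
  have h1 := hx.2
  have h2 := hy.2
  unfold chaconLevel at h1 h2
  rw [mem_Ico] at h1 h2
  have h3 : (3 : ℝ)⁻¹ ^ (n0 + r) ≤ (3 : ℝ)⁻¹ ^ r :=
    pow_le_pow_of_le_one (by norm_num) (by norm_num) (by omega)
  have : |(x : ℝ) - y| < (3 : ℝ)⁻¹ ^ (n0 + r) := by
    rw [abs_lt]; constructor <;> linarith [h1.1, h1.2, h2.1, h2.2]
  linarith

theorem comm_iter (S : ChaconX → ChaconX) (hcomm : ∀ x, S (chaconT x) = chaconT (S x)) (k : ℕ)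
    (x : ChaconX) : S (chaconT^[k] x) = chaconT^[k] (S x) := by
  induction k with
  | zero => rfl
  | succ k ih => rw [Function.iterate_succ_apply', Function.iterate_succ_apply', hcomm, ih]

theorem pair_pos (S : ChaconX → ChaconX) (hcomm : ∀ x, S (chaconT x) = chaconT (S x))
    {n a1 a2 b1 b2 : ℕ} {x1 x2 : ChaconX} (h1 : InLv n a1 x1) (h2 : InLv n a2 x2)
    (hu : (x1 : ℝ) - chaconL n a1 = x2 - chaconL n a2)
    (h1' : InLv n b1 (S x1)) (h2' : InLv n b2 (S x2)) (ha : a1 ≤ a2)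
    (hb : b1 + (a2 - a1) < chaconH n) : b2 = b1 + (a2 - a1) := by
  have e : chaconT^[a2 - a1] x1 = x2 := by
    apply Subtype.ext
    have h3 : a1 + (a2 - a1) = a2 := by omega
    rw [chaconT_iter h1 (a2 - a1) (by have := h2.1; omega), h3]
    linarith
  have := h1'.iter (a2 - a1) hb
  rw [← comm_iter S hcomm, e] at this
  exact h2'.uniq this

/-- The set of `x` such that both `x` and `S x` are in `C m`. -/
def visA (S : ChaconX → ChaconX) (m : ℕ) : Set ℝ :=
  Subtype.val '' {x : ChaconX | x ∈ chaconC m ∧ S x ∈ chaconC m}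

theorem nonbad_same (S : ChaconX → ChaconX) (hcomm : ∀ x, S (chaconT x) = chaconT (S x))
    {m n : ℕ} (hmn : m ≤ n) {x : ChaconX} {p q t s : ℕ}
    (ht : t < 3) (hs : s < 3) (hp : p < chaconH n / 2) (hq : q < chaconH n / 2)
    (hx : InLv (n + 1) (chOff n t + p) x) (hy : InLv (n + 1) (chOff n s + q) (S x))
    (hnb : ¬ BadCol (visA S m) n (x - chaconL (n + 1) (chOff n t + p))) : t = s := by
  have V : ∀ t', t' < 3 → ∃ (x' : ChaconX) (p' q' s' : ℕ), p' < chaconH n / 2 ∧ q' < chaconH n / 2 ∧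
      s' < 3 ∧ InLv (n + 1) (chOff n t' + p') x' ∧ InLv (n + 1) (chOff n s' + q') (S x') ∧
      (x' : ℝ) - chaconL (n + 1) (chOff n t' + p') = x - chaconL (n + 1) (chOff n t + p) ∧
      (t' = t → s' = s) := by
    intro t' ht'
    by_cases htt : t' = t
    · subst htt
      exact ⟨x, p, q, s, hp, hq, hs, hx, hy, rfl, fun _ => rfl⟩
    · have hne : ¬ EmpCol (visA S m) n
          (x - chaconL (n + 1) (chOff n t + p) + t' * (3 : ℝ)⁻¹ ^ (n + 1)) :=
        fun h => hnb ⟨t', ht', h⟩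
      unfold EmpCol at hne
      push Not at hne
      obtain ⟨i, hi, x', ⟨hx1, hx2⟩, e⟩ := hne
      have e' : (x' : ℝ) = chaconL (n + 1) (chOff n t' + i)
          + (x - chaconL (n + 1) (chOff n t + p)) := by
        rw [e, chL_off n t' i ht' hi]; ring
      have hl : InLv (n + 1) (chOff n t' + i) x' := by
        refine ⟨by have := chOff_lt n t' i hi; omega, ?_⟩
        have := mem_level_shift (j := chOff n t' + i) hx.2
        rw [e']; convert this using 1; ring
      obtain ⟨i2, hi2, hl2⟩ := chaconC_up hmn hx1
      obtain ⟨q', hq', hlq⟩ := chaconC_up hmn hx2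
      have hii : i2 = i := by
        have hl3 : InLv n i x' := by
          refine ⟨hi, ?_⟩
          have h1 := hx.2
          unfold chaconLevel at h1 ⊢
          rw [mem_Ico] at h1 ⊢
          have h3 : (3 : ℝ)⁻¹ ^ n = 3 * (3 : ℝ)⁻¹ ^ (n + 1) := by rw [pow_succ]; ring
          have hd : (0 : ℝ) < (3 : ℝ)⁻¹ ^ (n + 1) := by positivity
          have ht2 : (t' : ℝ) ≤ 2 := by exact_mod_cast (by omega : t' ≤ 2)
          have ht0 : (0 : ℝ) ≤ t' := by positivity
          have hm : (t' : ℝ) * (3 : ℝ)⁻¹ ^ (n + 1) ≤ 2 * (3 : ℝ)⁻¹ ^ (n + 1) := by gcongr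
          have hm0 : 0 ≤ (t' : ℝ) * (3 : ℝ)⁻¹ ^ (n + 1) := by positivity
          constructor <;> linarith [h1.1, h1.2]
        exact hl2.uniq hl3
      obtain ⟨s', hs', hls⟩ := hlq.step
      exact ⟨x', i, q', s', hii ▸ hi2, hq', hs', hl, hls, by rw [e']; ring, fun h => absurd h htt⟩
  obtain ⟨x0, p0, q0, s0, hp0, hq0, hs0, hx0, hy0, hu0, hc0⟩ := V 0 (by norm_num)
  obtain ⟨x1, p1, q1, s1, hp1, hq1, hs1, hx1, hy1, hu1, hc1⟩ := V 1 (by norm_num)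
  obtain ⟨x2, p2, q2, s2, hp2, hq2, hs2, hx2, hy2, hu2, hc2⟩ := V 2 (by norm_num)
  have hH := chH_succ n
  have A1 := pair_pos S hcomm hx0 hx1 (hu0.trans hu1.symm) hy0 hy1
    (by simp [chOff]; omega) (by rw [hH]; simp only [chOff]; split_ifs <;> omega)
  have A2 := pair_pos S hcomm hx1 hx2 (hu1.trans hu2.symm) hy1 hy2
    (by simp [chOff]; omega) (by rw [hH]; simp only [chOff]; split_ifs <;> omega)
  have o0 : chOff n 0 = 0 := rfl
  have o1 : chOff n 1 = chaconH n := rfl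
  have o2 : chOff n 2 = 2 * chaconH n + 1 := rfl
  rw [o0, o1] at A1
  rw [o1, o2] at A2
  have res : s0 = 0 ∧ s1 = 1 ∧ s2 = 2 := by
    rcases (by omega : s0 = 0 ∨ s0 = 1 ∨ s0 = 2) with rfl | rfl | rfl <;>
    rcases (by omega : s1 = 0 ∨ s1 = 1 ∨ s1 = 2) with rfl | rfl | rfl <;>
    rcases (by omega : s2 = 0 ∨ s2 = 1 ∨ s2 = 2) with rfl | rfl | rfl <;>
    simp only [o0, o1, o2] at A1 A2 <;> omega
  rcases (by omega : t = 0 ∨ t = 1 ∨ t = 2) with rfl | rfl | rfl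
  · rw [← hc0 rfl, res.1]
  · rw [← hc1 rfl, res.2.1]
  · rw [← hc2 rfl, res.2.2]

theorem good_point (S : ChaconX → ChaconX) (hcomm : ∀ x, S (chaconT x) = chaconT (S x))
    {m n0 : ℕ} (hmn : m ≤ n0) (x : ChaconX) (hx : (x : ℝ) ∈ ⋂ r, GoodS (visA S m) n0 r) :
    ∃ k : ℕ, S x = chaconT^[k] x ∨ chaconT^[k] (S x) = x := by
  rw [mem_iInter] at hx
  obtain ⟨x', ⟨hx1, hx2⟩, e⟩ := hx 0
  have := Subtype.ext e
  subst this
  obtain ⟨i0, hi0, hl0⟩ := chaconC_up hmn hx1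
  obtain ⟨j0, hj0, hm0⟩ := chaconC_up hmn hx2
  have key : ∀ r, ∃ i j, i < chaconH (n0 + r) / 2 ∧ j < chaconH (n0 + r) / 2 ∧
      InLv (n0 + r) i x' ∧ InLv (n0 + r) j (S x') ∧ j + i0 = i + j0 := by
    intro r
    induction r with
    | zero => exact ⟨i0, j0, hi0, hj0, hl0, hm0, by omega⟩
    | succ r ih =>
      obtain ⟨i, j, hi, hj, hli, hlj, he⟩ := ih
      obtain ⟨t, ht, hli'⟩ := hli.step
      obtain ⟨s, hs, hlj'⟩ := hlj.step
      have hts : t = s := by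
        refine nonbad_same S hcomm (m := m) (by omega) ht hs hi hj hli' hlj' ?_
        intro hb
        exact (hx (r + 1)).2 ⟨_, hli'.1, hli'.2, hb⟩
      subst hts
      have a1 := hli.1
      have a2 := hlj.1
      refine ⟨_, _, ?_, ?_, hli', hlj', by omega⟩
      · rw [← add_assoc, halfH_succ]; unfold chOff; split_ifs <;> omega
      · rw [← add_assoc, halfH_succ]; unfold chOff; split_ifs <;> omega
  rcases le_total i0 j0 with hle | hle
  · refine ⟨j0 - i0, Or.inl ?_⟩
    apply eq_of_levels n0
    intro r
    obtain ⟨i, j, -, -, hli, hlj, he⟩ := key r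
    have hj : i + (j0 - i0) = j := by omega
    have := hli.iter (j0 - i0) (by rw [hj]; exact hlj.1)
    rw [hj] at this
    exact ⟨j, hlj, this⟩
  · refine ⟨i0 - j0, Or.inr ?_⟩
    apply eq_of_levels n0
    intro r
    obtain ⟨i, j, -, -, hli, hlj, he⟩ := key r
    have hj : j + (i0 - j0) = i := by omega
    have := hlj.iter (i0 - j0) (by rw [hj]; exact hli.1)
    rw [hj] at this
    exact ⟨i, this, hli⟩

theorem chaconMu_apply (B : Set ChaconX) : chaconMu B = volume (Subtype.val '' B : Set ℝ) :=
  (MeasurableEmbedding.subtype_coe measurableSet_Ici).comap_apply _ _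

theorem inv_level (P : Set ChaconX) (hinv : ∀ x, chaconT x ∈ P ↔ x ∈ P) (n i : ℕ)
    (hi : i < chaconH n) :
    volume (Subtype.val '' P ∩ chaconLevel n i : Set ℝ)
      = volume (Subtype.val '' P ∩ chaconLevel n 0 : Set ℝ) := by
  have hit : ∀ (k : ℕ) x, chaconT^[k] x ∈ P ↔ x ∈ P := by
    intro k
    induction k with
    | zero => intro x; rfl
    | succ k ih => intro x; rw [Function.iterate_succ_apply', hinv, ih]
  have h0 : 0 < chaconH n := chH_pos n
  have e : (Subtype.val '' P ∩ chaconLevel n 0 : Set ℝ)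
      = (fun x => x + (chaconL n i - chaconL n 0)) ⁻¹' (Subtype.val '' P ∩ chaconLevel n i) := by
    ext x
    rw [mem_preimage, mem_inter_iff, mem_inter_iff]
    have hlev : x ∈ chaconLevel n 0 ↔ x + (chaconL n i - chaconL n 0) ∈ chaconLevel n i := by
      unfold chaconLevel
      rw [mem_Ico, mem_Ico]
      constructor
      · rintro ⟨h1, h2⟩; constructor <;> linarith
      · rintro ⟨h1, h2⟩; constructor <;> linarith
    rw [← hlev]
    refine and_congr_left fun hx => ?_
    have hx' : InLv n 0 x := ⟨h0, hx⟩
    let z : ChaconX := ⟨x, hx'.nonneg⟩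
    have hz := chaconT_iter (x := z) hx' i (by omega)
    rw [zero_add] at hz
    have e1 : x ∈ (Subtype.val '' P : Set ℝ) ↔ z ∈ P := by
      constructor
      · rintro ⟨w, hw, rfl⟩; exact hw
      · intro h; exact ⟨z, h, rfl⟩
    have e2 : x + (chaconL n i - chaconL n 0) ∈ (Subtype.val '' P : Set ℝ) ↔ chaconT^[i] z ∈ P := by
      constructor
      · rintro ⟨w, hw, h⟩
        have : w = chaconT^[i] z := by
          apply Subtype.ext; rw [h, hz]; simp only [z]; ring
        rw [← this]; exact hw
      · intro h; exact ⟨_, h, by rw [hz]; simp only [z]; ring⟩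
    rw [e1, e2, hit]
  rw [e, measure_preimage_add_right]

theorem chacon_erg (P : Set ChaconX) (hP : MeasurableSet P) (hinv : ∀ x, chaconT x ∈ P ↔ x ∈ P)
    (hpos : chaconMu P ≠ 0) : ∀ᵐ x ∂chaconMu, x ∈ P := by
  rw [ae_iff]
  by_contra hc
  change chaconMu Pᶜ ≠ 0 at hc
  rw [chaconMu_apply] at hpos hc
  have m1 : MeasurableSet (Subtype.val '' P : Set ℝ) := measurableSet_Ici.subtype_image hP
  have m2 : MeasurableSet (Subtype.val '' Pᶜ : Set ℝ) := measurableSet_Ici.subtype_image hP.compl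
  have s1 : ∀ Q : Set ChaconX, (Subtype.val '' Q : Set ℝ) ⊆ Ici 0 := by
    rintro Q _ ⟨x, -, rfl⟩; exact x.2
  obtain ⟨N, hN⟩ := level_density _ m1 (s1 _) hpos (1 / 2) (by norm_num)
  obtain ⟨M, hM⟩ := level_density _ m2 (s1 _) hc (1 / 2) (by norm_num)
  obtain ⟨k, hk, h1⟩ := hN (max N M) (le_max_left _ _)
  obtain ⟨l, hl, h2⟩ := hM (max N M) (le_max_right _ _)
  rw [inv_level P hinv _ k hk] at h1
  rw [inv_level Pᶜ (fun x => not_congr (hinv x)) _ l hl] at h2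
  have hdis : Disjoint (Subtype.val '' P ∩ chaconLevel (max N M) 0 : Set ℝ)
      (Subtype.val '' Pᶜ ∩ chaconLevel (max N M) 0) := by
    rw [Set.disjoint_left]
    rintro x ⟨⟨y, hy, rfl⟩, -⟩ ⟨⟨z, hz, h⟩, -⟩
    exact hz (Subtype.ext h ▸ hy)
  have hsum : volume (Subtype.val '' P ∩ chaconLevel (max N M) 0 : Set ℝ)
      + volume (Subtype.val '' Pᶜ ∩ chaconLevel (max N M) 0 : Set ℝ)
      ≤ ENNReal.ofReal ((3 : ℝ)⁻¹ ^ (max N M)) := by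
    rw [← measure_union hdis (m2.inter (level_meas _ _))]
    calc _ ≤ volume (chaconLevel (max N M) 0) :=
          measure_mono (union_subset inter_subset_right inter_subset_right)
      _ = _ := by unfold chaconLevel; rw [Real.volume_Ico, add_sub_cancel_left]
  have hlt := ENNReal.add_lt_add h1 h2
  rw [← add_mul, ENNReal.add_halves, one_mul] at hlt
  exact absurd hsum (not_le.2 hlt)

theorem chaconC_meas (m : ℕ) : MeasurableSet (chaconC m) := by
  have : chaconC m = ⋃ k, ⋃ (_ : k < chaconH m / 2),
      (Subtype.val ⁻¹' chaconLevel m k : Set ChaconX) := by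
    ext x; simp [chaconC]
  rw [this]
  exact MeasurableSet.iUnion fun k => MeasurableSet.iUnion fun _ =>
    measurable_subtype_coe (level_meas m k)

theorem chaconC_cover (x : ChaconX) : ∃ N, ∀ n, N ≤ n → x ∈ chaconC n := by
  obtain ⟨N, hN⟩ := tower_cover x
  obtain ⟨k, hk, -⟩ := hN N le_rfl
  obtain ⟨t, ht, h'⟩ := hk.step
  have hx : x ∈ chaconC (N + 1) := by
    refine ⟨_, ?_, h'.2⟩
    have := hk.1
    rw [halfH_succ]; unfold chOff; split_ifs <;> omega
  refine ⟨N + 1, fun n hn => ?_⟩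
  obtain ⟨k, hk, h⟩ := chaconC_up hn hx
  exact ⟨k, hk, h.2⟩

theorem visA_meas (S : ChaconX → ChaconX) (hSm : Measurable S) (m : ℕ) :
    MeasurableSet (visA S m) :=
  measurableSet_Ici.subtype_image ((chaconC_meas m).inter (hSm (chaconC_meas m)))

theorem exists_visA (S : ChaconX → ChaconX) : ∃ m, volume (visA S m) ≠ 0 := by
  by_contra! h
  have h1 : volume (⋃ m, visA S m) = 0 := measure_iUnion_null h
  have h2 : Ici (0 : ℝ) ⊆ ⋃ m, visA S m := by
    intro x hx
    obtain ⟨N, hN⟩ := chaconC_cover ⟨x, hx⟩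
    obtain ⟨M, hM⟩ := chaconC_cover (S ⟨x, hx⟩)
    exact mem_iUnion.2 ⟨max N M, ⟨x, hx⟩, ⟨hN _ (le_max_left _ _), hM _ (le_max_right _ _)⟩, rfl⟩
  have h3 := measure_mono_null h2 h1
  simp at h3

theorem exists_pos_power (S : ChaconX → ChaconX) (hSm : Measurable S)
    (hcomm : ∀ x, S (chaconT x) = chaconT (S x)) :
    ∃ k : ℕ, chaconMu {x | S x = chaconT^[k] x} ≠ 0 ∨ chaconMu {x | chaconT^[k] (S x) = x} ≠ 0 := by
  obtain ⟨m, hm⟩ := exists_visA S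
  have hsub : visA S m ⊆ Ici 0 := by rintro _ ⟨x, -, rfl⟩; exact x.2
  obtain ⟨N, hN⟩ := level_density _ (visA_meas S hSm m) hsub hm (3 / 4)
    (by rw [ENNReal.div_lt_iff] <;> norm_num)
  obtain ⟨j, hj, h⟩ := hN (max N m) (le_max_left _ _)
  have hg := good_pos _ (visA_meas S hSm m) _ j hj h
  by_contra! hall
  apply hg
  have hz : chaconMu (⋃ k : ℕ, ({x | S x = chaconT^[k] x} ∪ {x | chaconT^[k] (S x) = x})) = 0 :=
    measure_iUnion_null fun k => measure_union_null (hall k).1 (hall k).2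
  rw [chaconMu_apply] at hz
  refine measure_mono_null ?_ hz
  intro x hx
  have hx0 : x ∈ Ici (0 : ℝ) := hsub (mem_iInter.1 hx 0)
  obtain ⟨k, hk⟩ := good_point S hcomm (le_max_right N m) ⟨x, hx0⟩ hx
  exact ⟨⟨x, hx0⟩, mem_iUnion.2 ⟨k, hk⟩, rfl⟩

/-- **Proposition (trivial centralizer).**  The centralizer of the infinite Chacon
transformation `T` is reduced to the powers of `T`: any measure-preserving
transformation `S` of `(X, μ)` commuting with `T` coincides `μ`-almost everywhere with
some power `T^k`, `k ∈ ℤ`. -/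
theorem chacon_centralizer (S : ChaconX → ChaconX) (hSm : Measurable S)
    (hS : MeasurePreserving S chaconMu chaconMu)
    (hcomm : ∀ x, S (chaconT x) = chaconT (S x)) :
    ∃ k : ℤ, ∀ᵐ x ∂chaconMu, S x = chaconTZ k x := by
  have hTk : ∀ k : ℕ, Measurable (chaconT^[k]) := fun k => chaconT_meas.iterate k
  obtain ⟨k, hk | hk⟩ := exists_pos_power S hSm hcomm
  · refine ⟨k, ?_⟩
    have := chacon_erg _ (measurableSet_eq_fun hSm (hTk k)) (fun x => ?_) hk
    · filter_upwards [this] with x hx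
      have hx : S x = chaconT^[k] x := hx
      simpa [chaconTZ] using hx
    · change S (chaconT x) = chaconT^[k] (chaconT x) ↔ S x = chaconT^[k] x
      rw [hcomm, ← Function.iterate_succ_apply, Function.iterate_succ_apply', chaconT_inj.eq_iff]
  · refine ⟨-(k : ℤ), ?_⟩
    have := chacon_erg _ (measurableSet_eq_fun ((hTk k).comp hSm) measurable_id) (fun x => ?_) hk
    · filter_upwards [this] with x hx
      have hx : chaconT^[k] (S x) = x := hx
      have e : chaconTinv^[k] x = S x := by
        conv_lhs => rw [← hx]
        exact chaconTinv_iter k (S x)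
      rcases Nat.eq_zero_or_pos k with rfl | hpos
      · simpa [chaconTZ] using hx
      · have hn : ¬ (0 ≤ -(k : ℤ)) := by omega
        simp only [chaconTZ, if_neg hn, neg_neg, Int.toNat_natCast]
        exact e.symm
    · change chaconT^[k] (S (chaconT x)) = chaconT x ↔ chaconT^[k] (S x) = x
      rw [hcomm, ← Function.iterate_succ_apply, Function.iterate_succ_apply', chaconT_inj.eq_iff]
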